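/- Fix a prime p and n ∈ ℕ, and let T_n be the presented R-module described below. Then T_n is self-dual: there is an isomorphism of R-modules between T_n and its Pontryagin dual Hom_ℤ(T_n, ℚ/ℤ), where R acts on the dual by (r·f)(x) = f(r·x). -/

import Mathlib

open Polynomial Finsupp

noncomputable section

/-- The ideal `(p) ⊆ ℤ` is prime when `p` is a natural prime. -/
instance spanNatPrimeInt (p : ℕ) [hp : Fact p.Prime] :
    (Ideal.span {(p : ℤ)}).IsPrime := by
  rw [Ideal.span_singleton_prime (by exact_mod_cast hp.out.ne_zero)]
  exact Int.prime_iff_natAbs_prime.2 (by simpa using hp.out)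

/-- Words on the alphabet `{0, 1, …, p−1}`. -/
abbrev Word (p : ℕ) : Type := List (Fin p)

/-- The letter `p − 1`. -/
def lastLetter (p : ℕ) [hp : Fact p.Prime] : Fin p :=
  ⟨p - 1, by have := hp.out.pos; omega⟩

/-- The letter `0`. -/
def zeroLetter (p : ℕ) [hp : Fact p.Prime] : Fin p := ⟨0, hp.out.pos⟩

/-- The defining relations of the module `T_n` over `R = Zp[v]` (with `v = X`):
(i) `g_w` for every word `w` with `|w| > n`; and
(ii) for every `w` with `|w| ≤ n+1`, the element
`p·g_w − v^(p^(n−|w|+2))·g_{w'} − g_{w·0}` if `w = w'·(p−1)` ends in `p−1`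
(equivalently, for every `w'` with `|w'| ≤ n`, taking `w = w'·(p−1)` of length
`|w'|+1`, so that `n−|w|+2 = n+1−|w'|`), and `p·g_w − g_{w·0}` otherwise. -/
def rels (p : ℕ) [Fact p.Prime] (Zp : Type) [CommRing Zp] (n : ℕ) :
    Set (Word p →₀ Polynomial Zp) :=
  {x | ∃ w : Word p, n < w.length ∧ x = single w 1} ∪
  {x | ∃ w' : Word p, w'.length ≤ n ∧
      x = single (w' ++ [lastLetter p]) (p : Polynomial Zp)
        - single w' (X ^ p ^ (n + 1 - w'.length))
        - single ((w' ++ [lastLetter p]) ++ [zeroLetter p]) 1} ∪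
  {x | ∃ w : Word p, w.length ≤ n + 1 ∧ (∀ w' : Word p, w ≠ w' ++ [lastLetter p]) ∧
      x = single w (p : Polynomial Zp) - single (w ++ [zeroLetter p]) 1}

/-- The torsion module `T_n` of Angeltveit–Hill–Lawson: the quotient of the
free `Zp[v]`-module on the words `{g_w : w ∈ W}` by the relations `rels`. -/
abbrev T (p : ℕ) [Fact p.Prime] (Zp : Type) [CommRing Zp] (n : ℕ) : Type :=
  (Word p →₀ Polynomial Zp) ⧸ Submodule.span (Polynomial Zp) (rels p Zp n)

/-- The generator `g_w` of `T_n`. -/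
def g (p : ℕ) [Fact p.Prime] (Zp : Type) [CommRing Zp] (n : ℕ) (w : Word p) :
    T p Zp n :=
  Submodule.Quotient.mk (single w (1 : Polynomial Zp))

/-- A quotient `P ⧸ Q` is self-dual if `Q` is the sum of the radical of a pairing `β` on `P` and the
image of a self-adjoint operator `D` that has a self-adjoint inverse up to the factor `q`, and if
`β` induces a perfect pairing modulo `q`. -/
theorem nonempty_equiv_characterModule {R P S : Type*} [CommRing R] [AddCommGroup P] [Module R P]
    [AddCommGroup S] (Q : Submodule R P) (q : ℕ) (χ : S →+ AddCircle (1 : ℚ))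
    (β : P →+ P →+ S) (D D' : Module.End R P)
    (hq : ∀ s : S, q • s = 0 → s = 0) (hχ : ∀ s : S, χ (q • s) = 0)
    (hsymm : ∀ x y, β x y = β y x) (hβ : ∀ (r : R) x y, β (r • x) y = β x (r • y))
    (hD : ∀ x y, β (D x) y = β x (D y)) (hD' : ∀ x y, β (D' x) y = β x (D' y))
    (hcomm : ∀ x, D (D' x) = D' (D x)) (hDD' : ∀ x y, β (D (D' x)) y = q • β x y)
    (hQ : ∀ x, x ∈ Q ↔ ∃ z, ∀ y, β (x - D z) y = 0)
    (hsep : ∀ x, (∀ y, χ (β x y) = 0) → ∃ z, ∀ y, β (x - q • z) y = 0)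
    (hsurj : ∀ f : P →+ AddCircle (1 : ℚ), (∀ x, f (q • x) = 0) → (∀ x ∈ Q, f x = 0) →
      ∃ z, ∀ x, f x = χ (β z x)) :
    Nonempty ((P ⧸ Q) ≃ₗ[R] CharacterModule (P ⧸ Q)) := by
  have hDmem : ∀ z, D z ∈ Q := fun z => (hQ _).2 ⟨z, by simp⟩
  let Φ : P →ₗ[R] CharacterModule P :=
    { toFun := fun y => χ.comp (β (D' y))
      map_add' := fun x y => by
        refine CharacterModule.ext _ fun z => ?_
        simp only [map_add]
        exact map_add χ _ _
      map_smul' := fun r y => by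
        refine CharacterModule.ext _ fun z => ?_
        change χ (β (D' (r • y)) z) = χ (β (D' y) (r • z))
        rw [map_smul, hβ] }
  have hΦ : ∀ y x, Φ y x = χ (β (D' y) x) := fun _ _ => rfl
  have hker : Φ.ker = Q := by
    ext y
    rw [LinearMap.mem_ker]
    constructor
    · intro h
      obtain ⟨z, hz⟩ := hsep (D' y) fun x => by rw [← hΦ, h]; rfl
      refine (hQ y).2 ⟨z, fun x => hq _ ?_⟩
      have h1 := hz (D x)
      rw [map_sub, AddMonoidHom.sub_apply, sub_eq_zero, map_nsmul, AddMonoidHom.nsmul_apply, ← hD,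
        ← hD, hDD'] at h1
      rw [map_sub, AddMonoidHom.sub_apply, smul_sub, h1, sub_self]
    · intro h
      obtain ⟨z, hz⟩ := (hQ y).1 h
      refine CharacterModule.ext _ fun x => ?_
      have h1 := hz (D' x)
      rw [map_sub, AddMonoidHom.sub_apply, sub_eq_zero, hD, hsymm z, hDD'] at h1
      rw [hΦ, hD', h1, hχ]
      rfl
  have hrange : Φ.range = (CharacterModule.dual Q.mkQ).range := by
    ext f
    constructor
    · rintro ⟨y, rfl⟩
      refine ⟨QuotientAddGroup.lift Q.toAddSubgroup (Φ y) fun x hx => ?_, ?_⟩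
      · have hx' : Φ x = 0 := by rw [← LinearMap.mem_ker, hker]; exact hx
        change χ (β (D' y) x) = 0
        rw [hD', hsymm, ← hΦ, hx']
        rfl
      · exact CharacterModule.ext _ fun x => rfl
    · rintro ⟨f, rfl⟩
      have hf : ∀ x ∈ Q, CharacterModule.dual Q.mkQ f x = 0 := fun x hx => by
        change f (Q.mkQ x) = 0
        rw [(LinearMap.mem_ker (f := Q.mkQ)).1 (by simpa using hx), map_zero]
      obtain ⟨z, hz⟩ := hsurj (CharacterModule.dual Q.mkQ f) (fun x => hf _ <|
        (hQ _).2 ⟨D' x, fun y => by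
          rw [map_sub, AddMonoidHom.sub_apply, hDD', map_nsmul, AddMonoidHom.nsmul_apply,
            sub_self]⟩) hf
      obtain ⟨y, hy⟩ := hsep (D z) fun x => by rw [hD, ← hz]; exact hf _ (hDmem x)
      refine ⟨y, CharacterModule.ext _ fun x => ?_⟩
      refine Eq.trans (congrArg χ ?_) (hz x).symm
      rw [← sub_eq_zero, ← AddMonoidHom.sub_apply, ← map_sub]
      refine hq _ ?_
      have h1 := hy (D' x)
      rw [map_sub, AddMonoidHom.sub_apply, sub_eq_zero, map_nsmul, AddMonoidHom.nsmul_apply, ← hD',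
        ← hD', ← hcomm, hDD'] at h1
      rw [map_sub, AddMonoidHom.sub_apply, smul_sub, h1, sub_self]
  refine ⟨(Submodule.quotEquivOfEq _ _ hker.symm).trans <| Φ.quotKerEquivRange.trans <|
    (LinearEquiv.ofEq _ _ hrange).trans <| (LinearEquiv.ofInjective _ <|
      CharacterModule.dual_injective_of_surjective _ Q.mkQ_surjective).symm⟩

section Localization

variable (p : ℕ) [Fact p.Prime] (S : Type*) [CommRing S] [Algebra ℤ S]
  [IsLocalization.AtPrime S (Ideal.span {(p : ℤ)})]

theorem eq_zero_of_prime_pow_nsmul_eq_zero (N : ℕ) (s : S)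
    (h : p ^ N • s = 0) : s = 0 := by
  have hp := (Fact.out : p.Prime)
  have : IsDomain S := IsLocalization.isDomain_of_atPrime S (Ideal.span {(p : ℤ)})
  have hinj := IsLocalization.injective S
    (Ideal.primeCompl_le_nonZeroDivisors (Ideal.span {(p : ℤ)}))
  rw [nsmul_eq_mul, mul_eq_zero] at h
  refine h.resolve_left fun h0 => ?_
  have h1 : algebraMap ℤ S ((p ^ N : ℕ) : ℤ) = algebraMap ℤ S 0 := by
    rw [eq_intCast, map_zero]; exact_mod_cast h0
  have := hinj h1
  exact (pow_pos hp.pos N).ne' (by exact_mod_cast this)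

theorem exists_ringHom_zmod_prime_pow (N : ℕ) :
    ∃ ρ : S →+* ZMod (p ^ N), ∀ s, ρ s = 0 → ∃ t, s = p ^ N • t := by
  have hp := (Fact.out : p.Prime)
  have hu : ∀ y : (Ideal.span {(p : ℤ)}).primeCompl, IsUnit (Int.castRingHom (ZMod (p ^ N)) y) := by
    rintro ⟨y, hy⟩
    have h1 : ¬ (p : ℤ) ∣ y := by rwa [← Ideal.mem_span_singleton]
    have h2 : IsCoprime y ((p : ℤ) ^ N) :=
      (IsCoprime.pow_left (((Nat.prime_iff_prime_int.1 hp).coprime_iff_not_dvd).2 h1)).symm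
    obtain ⟨a, b, hab⟩ := h2
    refine IsUnit.of_mul_eq_one (a : ZMod (p ^ N)) ?_
    have := congrArg (Int.cast : ℤ → ZMod (p ^ N)) hab
    push_cast at this
    rw [← Nat.cast_pow, ZMod.natCast_self] at this
    simpa [mul_comm] using this
  refine ⟨IsLocalization.lift hu, fun s hs => ?_⟩
  obtain ⟨a, b, rfl⟩ := IsLocalization.exists_mk'_eq (Ideal.span {(p : ℤ)}).primeCompl s
  rw [IsLocalization.lift_mk'_spec, mul_zero, eq_intCast, ZMod.intCast_zmod_eq_zero_iff_dvd] at hs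
  obtain ⟨c, rfl⟩ := hs
  refine ⟨IsLocalization.mk' S c b, ?_⟩
  rw [← IsLocalization.mul_mk'_eq_mk'_of_mul, nsmul_eq_mul, eq_intCast, Int.cast_natCast]

theorem exists_character_localization (N : ℕ) :
    ∃ χ : S →+ AddCircle (1 : ℚ), (∀ s, χ (p ^ N • s) = 0) ∧
      (∀ s, χ s = 0 → ∃ t, s = p ^ N • t) ∧
      ∀ f : S →+ AddCircle (1 : ℚ), (∀ s, f (p ^ N • s) = 0) → ∃ c, ∀ s, f s = χ (s * c) := by
  have hp := (Fact.out : p.Prime)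
  have hpN : ((p ^ N : ℕ) : ℚ) ≠ 0 := by exact_mod_cast (pow_pos hp.pos N).ne'
  obtain ⟨ρ, hρ⟩ := exists_ringHom_zmod_prime_pow p S N
  let ψ₀ : ℤ →+ AddCircle (1 : ℚ) := zmultiplesHom _ (((1 / (p ^ N : ℕ) : ℚ)) : AddCircle (1 : ℚ))
  have hψ₀ : ∀ m, ψ₀ m = ((m / (p ^ N : ℕ) : ℚ) : AddCircle (1 : ℚ)) := fun m => by
    rw [zmultiplesHom_apply, ← AddCircle.coe_zsmul, zsmul_eq_mul, mul_one_div]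
  have hψ₁ : ψ₀ (p ^ N : ℕ) = 0 := by
    rw [hψ₀, AddCircle.coe_eq_zero_iff]
    exact ⟨1, by rw [Int.cast_natCast, div_self hpN, one_zsmul]⟩
  let ψ := ZMod.lift (p ^ N) ⟨ψ₀, hψ₁⟩
  have hψ : Function.Injective ψ := by
    refine (ZMod.lift_injective _).2 fun m hm => ?_
    change ψ₀ m = 0 at hm
    rw [hψ₀, AddCircle.coe_eq_zero_iff] at hm
    obtain ⟨k, hk⟩ := hm
    rw [zsmul_eq_mul, mul_one, eq_div_iff hpN] at hk
    have : m = k * (p ^ N : ℕ) := by exact_mod_cast hk.symm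
    rw [this, Int.cast_mul, Int.cast_natCast, ZMod.natCast_self, mul_zero]
  have hρ0 : ∀ s, ρ (p ^ N • s) = 0 := fun s => by
    rw [map_nsmul, nsmul_eq_mul, ZMod.natCast_self, zero_mul]
  have hval : ∀ m : ℤ, ψ (ρ m) = ψ₀ m := fun m => by
    rw [map_intCast]; exact ZMod.lift_coe _ _ _
  refine ⟨ψ.comp ρ, fun s => ?_, fun s hs => hρ s ?_, fun f hf => ?_⟩
  · exact (congrArg ψ (hρ0 s)).trans (map_zero ψ)
  · exact hψ (by simpa using hs)
  · have hf1 : p ^ N • f 1 = 0 := by rw [← map_nsmul, hf]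
    obtain ⟨x, hx⟩ := QuotientAddGroup.mk_surjective (f 1)
    change (x : AddCircle (1 : ℚ)) = _ at hx
    rw [← hx, ← AddCircle.coe_nsmul, AddCircle.coe_eq_zero_iff] at hf1
    obtain ⟨k, hk⟩ := hf1
    rw [zsmul_eq_mul, mul_one, nsmul_eq_mul] at hk
    refine ⟨(k : S), fun s => ?_⟩
    obtain ⟨m, hm⟩ := ZMod.intCast_surjective (ρ s)
    obtain ⟨t, ht⟩ := hρ (s - m) (by rw [map_sub, map_intCast, hm, sub_self])
    obtain rfl : s = m + p ^ N • t := by rw [← ht]; ring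
    have h1 : f m = ψ₀ (m * k) := by
      rw [hψ₀, ← zsmul_one, map_zsmul, ← hx, ← AddCircle.coe_zsmul]
      congr 1
      rw [zsmul_eq_mul, eq_div_iff hpN, mul_assoc, mul_comm x, Int.cast_mul, hk]
    rw [map_add, hf, add_zero, h1, ← hval, add_mul, smul_mul_assoc]
    refine congrArg ψ ?_
    change _ = ρ _
    rw [map_add, hρ0, add_zero, Int.cast_mul]

end Localization

section WordPairing

variable {p : ℕ}

/-- The word obtained by replacing each letter `a` by `p - 1 - a`. -/
def revWord (w : Word p) : Word p := w.map Fin.rev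

@[simp] theorem length_revWord (w : Word p) : (revWord w).length = w.length := by
  simp [revWord]

@[simp] theorem revWord_revWord (w : Word p) : revWord (revWord w) = w := by
  simp [revWord, Function.comp_def]

theorem eq_revWord_comm {w u : Word p} : w = revWord u ↔ u = revWord w :=
  ⟨fun h => by simp [h], fun h => by simp [h]⟩

theorem revWord_append_zeroLetter [Fact p.Prime] (w : Word p) :
    revWord (w ++ [zeroLetter p]) = revWord w ++ [lastLetter p] := by
  have : Fin.rev (zeroLetter p) = lastLetter p := by
    ext; simp [zeroLetter, lastLetter, Fin.val_rev]
  simp [revWord, this]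

/-- The exponent `p + p ^ 2 + ⋯ + p ^ (n + 1 - k)` of the power of `v` that annihilates the
generators of `T_n` indexed by words of length `k`. -/
def vExp (p n k : ℕ) : ℕ := ∑ i ∈ Finset.range (n + 1 - k), p ^ (i + 1)

theorem vExp_of_lt {n k : ℕ} (h : n < k) : vExp p n k = 0 := by
  simp [vExp, Nat.sub_eq_zero_of_le (Nat.succ_le_of_lt h)]

theorem vExp_of_le {n k : ℕ} (h : k ≤ n) :
    vExp p n k = vExp p n (k + 1) + p ^ (n + 1 - k) := by
  have : n + 1 - k = (n + 1 - (k + 1)) + 1 := by omega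
  rw [vExp, vExp, this, Finset.sum_range_succ]

theorem vExp_antitone (n : ℕ) : Antitone (vExp p n) := fun _ _ h =>
  Finset.sum_le_sum_of_subset (Finset.range_mono (by omega))

variable (p) (S : Type*) [CommRing S] (n : ℕ)

/-- The pairing of `v ^ i g_w` and `v ^ j g_u` is `1` if `u = revWord w` and
`i + j + 1 = vExp p n |w|`, and `0` otherwise. -/
def wordPairing : (Word p →₀ S[X]) →+ (Word p →₀ S[X]) →+ S :=
  Finsupp.liftAddHom fun w =>
    { toFun := fun f =>
        { toFun := fun y => (X * f * y (revWord w)).coeff (vExp p n w.length)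
          map_zero' := by simp
          map_add' := fun x y => by simp [mul_add] }
      map_zero' := by ext; simp
      map_add' := fun f h => by
        refine AddMonoidHom.ext fun y => ?_
        change (X * (f + h) * y (revWord w)).coeff _ =
          (X * f * y (revWord w)).coeff _ + (X * h * y (revWord w)).coeff _
        rw [mul_add, add_mul, coeff_add] }

variable {p S n}

theorem wordPairing_single (w : Word p) (f : S[X]) (y : Word p →₀ S[X]) :
    wordPairing p S n (single w f) y = (X * f * y (revWord w)).coeff (vExp p n w.length) := by
  simp [wordPairing]

theorem wordPairing_single_single (w u : Word p) (f h : S[X]) :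
    wordPairing p S n (single w f) (single u h) =
      if u = revWord w then (X * (f * h)).coeff (vExp p n w.length) else 0 := by
  rw [wordPairing_single, Finsupp.single_apply, ← mul_assoc]
  split_ifs <;> simp

theorem wordPairing_comm (x y : Word p →₀ S[X]) :
    wordPairing p S n x y = wordPairing p S n y x := by
  induction x using Finsupp.induction_linear with
  | zero => simp
  | add x x' hx hx' => simp [hx, hx']
  | single w f =>
    induction y using Finsupp.induction_linear with
    | zero => simp
    | add y y' hy hy' => simp [hy, hy']
    | single u h =>
      rw [wordPairing_single_single, wordPairing_single_single, mul_comm f h]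
      simp only [eq_revWord_comm (w := u)]
      split_ifs with hw
      · rw [hw, length_revWord]
      · rfl

theorem wordPairing_smul_left (r : S[X]) (x y : Word p →₀ S[X]) :
    wordPairing p S n (r • x) y = wordPairing p S n x (r • y) := by
  induction x using Finsupp.induction_linear with
  | zero => simp
  | add x x' hx hx' => simp [hx, hx', smul_add]
  | single w f =>
    rw [Finsupp.smul_single, wordPairing_single, wordPairing_single, Finsupp.smul_apply,
      smul_eq_mul, smul_eq_mul]
    congr 1
    ring

theorem wordPairing_single_monomial (w : Word p) {i j : ℕ} (s : S)
    (h : i + j + 1 = vExp p n w.length) (y : Word p →₀ S[X]) :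
    wordPairing p S n (single w (monomial j s)) y = s * (y (revWord w)).coeff i := by
  rw [wordPairing_single, ← h, X_mul_monomial, add_assoc, coeff_monomial_mul]

theorem wordPairing_eq_zero_iff (x : Word p →₀ S[X]) :
    (∀ y, wordPairing p S n x y = 0) ↔ ∀ w, X ^ vExp p n w.length ∣ x w := by
  constructor
  · intro h w
    rw [X_pow_dvd_iff]
    intro i hi
    have h1 := wordPairing_single_monomial (revWord w) (i := i) (n := n)
      (j := vExp p n w.length - 1 - i) 1 (by rw [length_revWord]; omega) x
    rwa [wordPairing_comm, h, revWord_revWord, one_mul, eq_comm] at h1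
  · intro h y
    rw [← Finsupp.sum_single x, Finsupp.sum, map_sum, AddMonoidHom.finsetSum_apply]
    refine Finset.sum_eq_zero fun w _ => ?_
    obtain ⟨f, hf⟩ := h w
    rw [wordPairing_single, hf, mul_left_comm, mul_assoc, coeff_X_pow_mul', if_pos le_rfl,
      Nat.sub_self, mul_assoc, mul_coeff_zero, coeff_X_zero, zero_mul]

theorem wordPairing_single_eq_zero {w : Word p} {f : S[X]} (h : X ^ vExp p n w.length ∣ f)
    (y : Word p →₀ S[X]) : wordPairing p S n (single w f) y = 0 := by
  refine (wordPairing_eq_zero_iff _).2 (fun u => ?_) y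
  rw [Finsupp.single_apply]
  split_ifs with hu
  · rwa [← hu]
  · exact dvd_zero _

variable (n) in
theorem exists_coeff_eq (c : Word p → ℕ → S) :
    ∃ z : Word p →₀ S[X], ∀ w, ∀ i < vExp p n w.length, (z w).coeff i = c w i := by
  classical
  have hfin : {w : Word p | w.length ≤ n}.Finite := List.finite_length_le _ n
  refine ⟨Finsupp.onFinset hfin.toFinset (fun w => if w.length ≤ n then
    ∑ i ∈ Finset.range (vExp p n w.length), monomial i (c w i) else 0) fun w hw => ?_,
    fun w i hi => ?_⟩
  · by_contra hw'
    exact hw (if_neg (by simpa using hw'))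
  · have hw : w.length ≤ n := by
      by_contra! hw
      simp [vExp_of_lt hw] at hi
    rw [Finsupp.onFinset_apply, if_pos hw, finsetSum_coeff]
    simp only [coeff_monomial]
    rw [Finset.sum_ite_eq' (Finset.range _) i, if_pos (Finset.mem_range.2 hi)]

theorem exists_sub_nsmul_of_forall_dvd {q : ℕ} (x : Word p →₀ S[X])
    (hx : ∀ w, ∀ i < vExp p n w.length, ∃ t, (x w).coeff i = q • t) :
    ∃ z, ∀ y, wordPairing p S n (x - q • z) y = 0 := by
  choose! c hc using hx
  obtain ⟨z, hz⟩ := exists_coeff_eq n c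
  refine ⟨z, (wordPairing_eq_zero_iff _).2 fun w => X_pow_dvd_iff.2 fun i hi => ?_⟩
  rw [Finsupp.sub_apply, Finsupp.smul_apply, coeff_sub, coeff_smul, hz w i hi, hc w i hi, sub_self]

variable [Fact p.Prime]

variable (p S n) in
/-- The operator by which `p` acts on the generators of `T_n`: it maps `g_w` to `g_{w·0}`, plus
`v ^ p ^ (n + 1 - |w'|) g_{w'}` if `w = w'·(p - 1)`. -/
def wordShift : Module.End S[X] (Word p →₀ S[X]) :=
  Finsupp.linearCombination S[X] fun w =>
    single (w ++ [zeroLetter p]) 1 + if w.getLast? = some (lastLetter p) then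
      single w.dropLast (X ^ p ^ (n + 1 - w.dropLast.length)) else 0

theorem wordShift_single_append (w : Word p) (f : S[X]) :
    wordShift p S n (single (w ++ [lastLetter p]) f) =
      single (w ++ [lastLetter p] ++ [zeroLetter p]) f +
        single w (f * X ^ p ^ (n + 1 - w.length)) := by
  simp [wordShift, Finsupp.linearCombination_single]

theorem wordShift_single_of_ne {w : Word p} (hw : ∀ w' : Word p, w ≠ w' ++ [lastLetter p])
    (f : S[X]) : wordShift p S n (single w f) = single (w ++ [zeroLetter p]) f := by
  have : w.getLast? ≠ some (lastLetter p) := fun h => by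
    obtain ⟨w', hw'⟩ := List.getLast?_eq_some_iff.1 h
    exact hw w' hw'
  simp [wordShift, Finsupp.linearCombination_single, this]

theorem wordPairing_wordShift_single_single (w u : Word p) (f h : S[X]) :
    wordPairing p S n (wordShift p S n (single w f)) (single u h) =
      (if u = revWord w ++ [lastLetter p] then
        (X * (f * h)).coeff (vExp p n u.length) else 0) +
      if w = revWord u ++ [lastLetter p] then
        (X * (h * f)).coeff (vExp p n w.length) else 0 := by
  have key : wordPairing p S n (single (w ++ [zeroLetter p]) f) (single u h) =
      if u = revWord w ++ [lastLetter p] then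
        (X * (f * h)).coeff (vExp p n u.length) else 0 := by
    rw [wordPairing_single_single, revWord_append_zeroLetter]
    split_ifs with hu
    · simp [hu]
    · rfl
  by_cases hw : ∃ w', w = w' ++ [lastLetter p]
  · obtain ⟨w, rfl⟩ := hw
    rw [wordShift_single_append, map_add, AddMonoidHom.add_apply, key]
    congr 1
    rw [wordPairing_single_single]
    simp only [eq_revWord_comm (w := u), List.append_cancel_right_eq]
    split_ifs with hu
    · rw [List.length_append, List.length_singleton]
      by_cases hn : w.length ≤ n
      · rw [vExp_of_le hn, ← coeff_mul_X_pow (X * (h * f))]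
        congr 1
        ring
      · rw [vExp_of_lt (by omega), vExp_of_lt (by omega)]
        simp
    · rfl
  · push Not at hw
    rw [wordShift_single_of_ne hw, key, if_neg (hw _), add_zero]

theorem wordPairing_wordShift (x y : Word p →₀ S[X]) :
    wordPairing p S n (wordShift p S n x) y = wordPairing p S n x (wordShift p S n y) := by
  induction x using Finsupp.induction_linear with
  | zero => simp
  | add x x' hx hx' => simp [hx, hx']
  | single w f =>
    induction y using Finsupp.induction_linear with
    | zero => simp
    | add y y' hy hy' => simp [hy, hy']
    | single u h =>
      rw [wordPairing_comm (single w f), wordPairing_wordShift_single_single,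
        wordPairing_wordShift_single_single, add_comm]

theorem wordPairing_wordShift_pow (k : ℕ) (x y : Word p →₀ S[X]) :
    wordPairing p S n ((wordShift p S n ^ k) x) y =
      wordPairing p S n x ((wordShift p S n ^ k) y) := by
  induction k generalizing x with
  | zero => simp
  | succ k ih =>
    rw [pow_succ, Module.End.mul_apply, ih, wordPairing_wordShift, ← Module.End.mul_apply,
      ← pow_succ', pow_succ]

theorem wordPairing_wordShift_pow_single_eq_zero (k j : ℕ) (w : Word p) (f : S[X])
    (hf : X ^ j ∣ f) (hk : vExp p n 0 + n + 1 ≤ j + w.length + k) (y : Word p →₀ S[X]) :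
    wordPairing p S n ((wordShift p S n ^ k) (single w f)) y = 0 := by
  induction k generalizing j w f with
  | zero =>
    refine wordPairing_single_eq_zero ((pow_dvd_pow X ?_).trans hf) y
    rcases lt_or_ge n w.length with hw | hw
    · simp [vExp_of_lt hw]
    · have := vExp_antitone (p := p) n (Nat.zero_le w.length)
      omega
  | succ k ih =>
    rcases lt_or_ge n w.length with hn | hn
    · rw [wordPairing_wordShift_pow]
      exact wordPairing_single_eq_zero (by simp [vExp_of_lt hn]) _
    rw [pow_succ, Module.End.mul_apply]
    by_cases hw : ∃ w', w = w' ++ [lastLetter p]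
    · obtain ⟨w, rfl⟩ := hw
      rw [List.length_append, List.length_singleton] at hn hk
      have h2 : 2 ≤ p ^ (n + 1 - w.length) :=
        (Fact.out : p.Prime).two_le.trans (Nat.le_self_pow (by omega) p)
      rw [wordShift_single_append, map_add, map_add, AddMonoidHom.add_apply,
        ih j _ f hf (by simp only [List.length_append, List.length_singleton]; omega), zero_add]
      refine ih (j + 2) _ _ ?_ (by omega)
      rw [pow_add]
      exact mul_dvd_mul hf (pow_dvd_pow X h2)
    · push Not at hw
      rw [wordShift_single_of_ne hw]
      exact ih j _ f hf (by rw [List.length_append, List.length_singleton]; omega)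

theorem wordPairing_wordShift_pow_eq_zero (x y : Word p →₀ S[X]) :
    wordPairing p S n ((wordShift p S n ^ (vExp p n 0 + n + 1)) x) y = 0 := by
  induction x using Finsupp.induction_linear with
  | zero => simp
  | add x x' hx hx' => simp [hx, hx']
  | single w f =>
    exact wordPairing_wordShift_pow_single_eq_zero _ 0 w f (by simp) (by omega) y

end WordPairing

section SpanRels

variable (p : ℕ) [Fact p.Prime] (S : Type) [CommRing S] (n : ℕ)

/-- Multiplication by `p` minus the shift; its values on the generators are the relations of
`T_n` of the second kind. -/
def wordRelation : Module.End S[X] (Word p →₀ S[X]) := (p : Module.End _ _) - wordShift p S n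

variable {p S n}

theorem wordRelation_apply (x : Word p →₀ S[X]) :
    wordRelation p S n x = p • x - wordShift p S n x := by
  simp [wordRelation, Module.End.natCast_apply]

theorem wordRelation_single_append (w : Word p) :
    wordRelation p S n (single (w ++ [lastLetter p]) 1) =
      single (w ++ [lastLetter p]) (p : S[X]) - single w (X ^ p ^ (n + 1 - w.length)) -
        single (w ++ [lastLetter p] ++ [zeroLetter p]) 1 := by
  rw [wordRelation_apply, wordShift_single_append, Finsupp.smul_single, nsmul_one, one_mul]
  abel

theorem wordRelation_single_of_ne {w : Word p} (hw : ∀ w' : Word p, w ≠ w' ++ [lastLetter p]) :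
    wordRelation p S n (single w 1) = single w (p : S[X]) - single (w ++ [zeroLetter p]) 1 := by
  rw [wordRelation_apply, wordShift_single_of_ne hw, Finsupp.smul_single, nsmul_one]

theorem single_mem_span_rels_of_lt {w : Word p} (hw : n < w.length) (f : S[X]) :
    single w f ∈ Submodule.span S[X] (rels p S n) := by
  have h : single w (1 : S[X]) ∈ Submodule.span S[X] (rels p S n) :=
    Submodule.subset_span (Or.inl (Or.inl ⟨w, hw, rfl⟩))
  simpa using Submodule.smul_mem _ f h

theorem wordRelation_mem_span_rels (x : Word p →₀ S[X]) :
    wordRelation p S n x ∈ Submodule.span S[X] (rels p S n) := by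
  induction x using Finsupp.induction_linear with
  | zero => simp
  | add x y hx hy => rw [map_add]; exact add_mem hx hy
  | single w f =>
    suffices h : wordRelation p S n (single w 1) ∈ Submodule.span S[X] (rels p S n) by
      rw [← mul_one f, ← smul_eq_mul, ← Finsupp.smul_single, map_smul]
      exact Submodule.smul_mem _ f h
    by_cases hw : ∃ w', w = w' ++ [lastLetter p]
    · obtain ⟨w, rfl⟩ := hw
      rw [wordRelation_single_append]
      rcases le_or_gt w.length n with hn | hn
      · exact Submodule.subset_span (Or.inl (Or.inr ⟨w, hn, rfl⟩))
      · refine sub_mem (sub_mem ?_ ?_) ?_ <;> refine single_mem_span_rels_of_lt ?_ _ <;> grind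
    · push Not at hw
      rw [wordRelation_single_of_ne hw]
      rcases le_or_gt w.length (n + 1) with hn | hn
      · exact Submodule.subset_span (Or.inr ⟨w, hn, hw, rfl⟩)
      · refine sub_mem ?_ ?_ <;> refine single_mem_span_rels_of_lt ?_ _ <;> grind

theorem single_mem_span_rels_of_dvd {w : Word p} {f : S[X]} (hf : X ^ vExp p n w.length ∣ f) :
    single w f ∈ Submodule.span S[X] (rels p S n) := by
  obtain ⟨d, hd⟩ : ∃ d, n + 1 ≤ w.length + d := ⟨n + 1, by omega⟩
  induction d generalizing w f with
  | zero => exact single_mem_span_rels_of_lt (by omega) f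
  | succ d ih =>
    rcases lt_or_ge n w.length with hn | hn
    · exact single_mem_span_rels_of_lt hn f
    obtain ⟨f, rfl⟩ := hf
    let f' : S[X] := X ^ vExp p n (w.length + 1) * f
    have h1 : single (w ++ [lastLetter p]) ((p : S[X]) * f') ∈
        Submodule.span S[X] (rels p S n) := by
      refine ih ?_ (by simp only [List.length_append, List.length_singleton]; omega)
      rw [List.length_append, List.length_singleton]
      exact (dvd_mul_right _ _).mul_left _
    have h2 : single (w ++ [lastLetter p] ++ [zeroLetter p]) f' ∈
        Submodule.span S[X] (rels p S n) := by
      refine ih ?_ (by simp only [List.length_append, List.length_singleton]; omega)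
      rw [List.length_append, List.length_append, List.length_singleton, List.length_singleton]
      exact (pow_dvd_pow X (vExp_antitone n (Nat.le_succ _))).mul_right _
    have h3 := Submodule.smul_mem _ f' (wordRelation_mem_span_rels (n := n)
      (single (w ++ [lastLetter p]) (1 : S[X])))
    have h4 : single w (X ^ vExp p n w.length * f) =
        single (w ++ [lastLetter p]) ((p : S[X]) * f') -
          single (w ++ [lastLetter p] ++ [zeroLetter p]) f' -
          f' • wordRelation p S n (single (w ++ [lastLetter p]) (1 : S[X])) := by
      rw [wordRelation_single_append, smul_sub, smul_sub, Finsupp.smul_single, Finsupp.smul_single,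
        Finsupp.smul_single, smul_eq_mul, smul_eq_mul, smul_eq_mul, mul_one, mul_comm f',
        vExp_of_le hn, pow_add]
      have : X ^ vExp p n (w.length + 1) * X ^ p ^ (n + 1 - w.length) * f =
          f' * X ^ p ^ (n + 1 - w.length) := by
        simp only [f']; ring
      rw [this]
      abel
    rw [h4]
    exact sub_mem (sub_mem h1 h2) h3

theorem mem_span_rels_iff (x : Word p →₀ S[X]) :
    x ∈ Submodule.span S[X] (rels p S n) ↔
      ∃ z, ∀ y, wordPairing p S n (x - wordRelation p S n z) y = 0 := by
  constructor
  · intro hx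
    induction hx using Submodule.span_induction with
    | mem x hx =>
      rcases hx with (⟨w, hw, rfl⟩ | ⟨w, hw, rfl⟩) | ⟨w, hw, hw', rfl⟩
      · refine ⟨0, fun y => ?_⟩
        rw [map_zero, sub_zero]
        exact wordPairing_single_eq_zero (by simp [vExp_of_lt hw]) y
      · exact ⟨single (w ++ [lastLetter p]) 1, by simp [wordRelation_single_append]⟩
      · exact ⟨single w 1, by simp [wordRelation_single_of_ne hw']⟩
    | zero => exact ⟨0, by simp⟩
    | add x x' _ _ hx hx' =>
      obtain ⟨z, hz⟩ := hx
      obtain ⟨z', hz'⟩ := hx'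
      refine ⟨z + z', fun y => ?_⟩
      rw [map_add, add_sub_add_comm, map_add, AddMonoidHom.add_apply, hz, hz', add_zero]
    | smul r x _ hx =>
      obtain ⟨z, hz⟩ := hx
      refine ⟨r • z, fun y => ?_⟩
      rw [map_smul, ← smul_sub, wordPairing_smul_left, hz]
  · rintro ⟨z, hz⟩
    rw [wordPairing_eq_zero_iff] at hz
    rw [← sub_add_cancel x (wordRelation p S n z)]
    refine add_mem ?_ (wordRelation_mem_span_rels z)
    rw [← Finsupp.sum_single (x - _)]
    exact Submodule.sum_mem _ fun w _ => single_mem_span_rels_of_dvd (hz w)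

theorem wordPairing_wordRelation (x y : Word p →₀ S[X]) :
    wordPairing p S n (wordRelation p S n x) y = wordPairing p S n x (wordRelation p S n y) := by
  simp [wordRelation_apply, wordPairing_wordShift]

variable (p S n) in
theorem exists_wordRelation_adjugate : ∃ (N : ℕ) (D' : Module.End S[X] (Word p →₀ S[X])),
    (∀ x y, wordPairing p S n (D' x) y = wordPairing p S n x (D' y)) ∧
    (∀ x, wordRelation p S n (D' x) = D' (wordRelation p S n x)) ∧
    ∀ x y, wordPairing p S n (wordRelation p S n (D' x)) y = p ^ N • wordPairing p S n x y := by
  let N := vExp p n 0 + n + 1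
  let D' : Module.End S[X] (Word p →₀ S[X]) :=
    ∑ i ∈ Finset.range N, (p : Module.End S[X] (Word p →₀ S[X])) ^ i * wordShift p S n ^ (N - 1 - i)
  have hcomm : Commute (p : Module.End S[X] (Word p →₀ S[X])) (wordShift p S n) :=
    Nat.cast_commute _ _
  have hD' : ∀ x, D' x = ∑ i ∈ Finset.range N, p ^ i • (wordShift p S n ^ (N - 1 - i)) x :=
    fun x => by
      simp only [D', LinearMap.sum_apply, ← Nat.cast_pow, Module.End.mul_apply,
        Module.End.natCast_apply]
  have hmul : wordRelation p S n * D' =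
      (p : Module.End S[X] (Word p →₀ S[X])) ^ N - wordShift p S n ^ N :=
    Commute.mul_geom_sum₂ (R := Module.End S[X] (Word p →₀ S[X])) hcomm N
  have hmul' : D' * wordRelation p S n =
      (p : Module.End S[X] (Word p →₀ S[X])) ^ N - wordShift p S n ^ N :=
    Commute.geom_sum₂_mul (R := Module.End S[X] (Word p →₀ S[X])) hcomm N
  refine ⟨N, D', fun x y => ?_, fun x => ?_, fun x y => ?_⟩
  · simp only [hD', map_sum, AddMonoidHom.finsetSum_apply, map_nsmul, AddMonoidHom.nsmul_apply,
      wordPairing_wordShift_pow]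
  · rw [← Module.End.mul_apply, ← Module.End.mul_apply, hmul, hmul']
  · rw [← Module.End.mul_apply, hmul, LinearMap.sub_apply, map_sub, AddMonoidHom.sub_apply,
      wordPairing_wordShift_pow_eq_zero, sub_zero, ← Nat.cast_pow, Module.End.natCast_apply,
      map_nsmul, AddMonoidHom.nsmul_apply]

theorem exists_character_eq_wordPairing {q : ℕ} (χ : S →+ AddCircle (1 : ℚ))
    (hχ : ∀ f : S →+ AddCircle (1 : ℚ), (∀ s, f (q • s) = 0) → ∃ c, ∀ s, f s = χ (s * c))
    (f : (Word p →₀ S[X]) →+ AddCircle (1 : ℚ)) (hf : ∀ x, f (q • x) = 0)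
    (hfQ : ∀ x ∈ Submodule.span S[X] (rels p S n), f x = 0) :
    ∃ z, ∀ x, f x = χ (wordPairing p S n z x) := by
  have hc : ∀ (w : Word p) (j : ℕ), ∃ c, ∀ s, f (single w (monomial j s)) = χ (s * c) :=
    fun w j => hχ ((f.comp (Finsupp.singleAddHom w)).comp (monomial j).toAddMonoidHom) fun s => by
      change f (single w (monomial j (q • s))) = 0
      rw [map_nsmul, ← Finsupp.smul_single]
      exact hf _
  choose c hc using hc
  obtain ⟨z, hz⟩ := exists_coeff_eq n fun (w : Word p) i =>
    c (revWord w) (vExp p n w.length - 1 - i)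
  refine ⟨z, fun x => ?_⟩
  induction x using Finsupp.induction_linear with
  | zero => simp
  | add x y hx hy => simp [hx, hy]
  | single w h =>
    induction h using Polynomial.induction_on' with
    | add h h' hh hh' => simp only [Finsupp.single_add, map_add, hh, hh']
    | monomial j s =>
      rw [wordPairing_comm]
      rcases lt_or_ge j (vExp p n w.length) with hj | hj
      · rw [wordPairing_single_monomial (i := vExp p n w.length - 1 - j) w s (by omega),
          hz _ _ (by rw [length_revWord]; omega), revWord_revWord, length_revWord, hc,
          show vExp p n w.length - 1 - (vExp p n w.length - 1 - j) = j by omega]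
      · have hdvd : X ^ vExp p n w.length ∣ monomial j s := by
          rw [← C_mul_X_pow_eq_monomial]
          exact (pow_dvd_pow X hj).mul_left _
        rw [wordPairing_single_eq_zero hdvd, map_zero]
        exact hfQ _ (single_mem_span_rels_of_dvd hdvd)

end SpanRels

/-- For any realization `Zp` of `ℤ_(p)`, the module `T_n` is self-dual: it is
isomorphic as an `R = Zp[v]`-module to its Pontryagin dual
`Hom_ℤ(T_n, ℚ/ℤ)`, where `R` acts on the dual by `(r • f) x = f (r • x)`. -/
theorem stmt17 (p : ℕ) [Fact p.Prime] (Zp : Type) [CommRing Zp] [Algebra ℤ Zp]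
    [IsLocalization.AtPrime Zp (Ideal.span {(p : ℤ)})] (n : ℕ) :
    Nonempty (T p Zp n ≃ₗ[Polynomial Zp] CharacterModule (T p Zp n)) := by
  obtain ⟨N, D', hD', hcomm, hDD'⟩ := exists_wordRelation_adjugate p Zp n
  obtain ⟨χ, hχ, hker, hsurj⟩ := exists_character_localization p Zp N
  refine nonempty_equiv_characterModule _ (p ^ N) χ (wordPairing p Zp n) (wordRelation p Zp n) D'
    (eq_zero_of_prime_pow_nsmul_eq_zero p Zp N) hχ wordPairing_comm wordPairing_smul_left
    wordPairing_wordRelation hD' hcomm hDD' mem_span_rels_iff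
    (fun x hx => exists_sub_nsmul_of_forall_dvd x fun w i hi => hker _ ?_)
    (exists_character_eq_wordPairing χ hsurj)
  have h := wordPairing_single_monomial (revWord w) (i := i) (n := n)
    (j := vExp p n w.length - 1 - i) 1 (by rw [length_revWord]; omega) x
  rw [revWord_revWord, one_mul, wordPairing_comm] at h
  rw [← h, hx]

end
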